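/- Fix any ρ > 0. For every real damping parameter ω, the supremum over θ ∈ T^H of max{ |1 − ω|, |1 − ω·g_v(θ)|, |1 − ω·σ*(1/g_v(θ), ρ)| } (the spectral radius of the symbol of the Vanka-Braess–Sarazin relaxation error operator) is at least 7/25, and this supremum equals 7/25 if and only if ω = 24/25. In other words, the optimal LFA smoothing factor for the Vanka-Braess–Sarazin relaxation is 7/25, uniquely attained at ω = 24/25, independently of the Lamé constants. -/

import Mathlib

open Real Set

/-- The high-frequency set `T^H`. -/
def TH : Set (ℝ × ℝ) :=
  (Ioc (-(π/2)) (3*π/2) ×ˢ Ioc (-(π/2)) (3*π/2)) \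
    (Ioc (-(π/2)) (π/2) ×ˢ Ioc (-(π/2)) (π/2))

/-- Scaled symbol of the five-point discrete Laplacian. -/
noncomputable def chi (θ : ℝ × ℝ) : ℝ := 4 - 2 * Real.cos θ.1 - 2 * Real.cos θ.2

/-- Scaled symbol of the product of the element-wise Vanka operator and the discrete Laplacian. -/
noncomputable def gv (θ : ℝ × ℝ) : ℝ :=
  chi θ * (7 + 2 * Real.cos θ.1 + 2 * Real.cos θ.2 + Real.cos θ.1 * Real.cos θ.2) / 24

/-- Third eigenvalue of the preconditioned elasticity symbol, as a function of
`t = η/χ` and `ρ = ε/λ`. -/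
noncomputable def sigmaStar (t ρ : ℝ) : ℝ := (1 + 2*ρ) / (1 + (1 + t)*ρ)

/-!
In the cosines `x`, `y` of the two frequencies, `g_v` is a cubic polynomial with maximum `4/3` at
`x = y = -1`, and on high frequencies, where one cosine is nonpositive, it has minimum `3/4` at
`(x, y) = (0, 1)`. The third eigenvalue is a weighted harmonic mean of `1` and `g_v`, so all three
eigenvalues of the preconditioned symbol stay in `[3/4, 4/3]`, and `g_v` attains both endpoints.
By convexity of `s ↦ |1 - ω s|` the smoothing factor is the larger of the values at the two
endpoints, whatever `ρ` is; it is minimal when these are opposite, as for optimally damped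
Richardson iteration.
-/

section Damping

variable {a b s ω : ℝ}

lemma abs_one_sub_mul_le_max (hs : s ∈ Icc a b) (ω : ℝ) :
    |1 - ω * s| ≤ max |1 - ω * a| |1 - ω * b| := by
  obtain ⟨has, hsb⟩ := hs
  rcases le_total 0 ω with hω | hω
  · rw [max_comm]
    exact abs_le_max_abs_abs (sub_le_sub_left (mul_le_mul_of_nonneg_left hsb hω) 1)
      (sub_le_sub_left (mul_le_mul_of_nonneg_left has hω) 1)
  · exact abs_le_max_abs_abs (sub_le_sub_left (mul_le_mul_of_nonpos_left has hω) 1)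
      (sub_le_sub_left (mul_le_mul_of_nonpos_left hsb hω) 1)

lemma sub_div_add_le_max_abs_one_sub_mul (ha : 0 < a) (hb : 0 < b) (ω : ℝ) :
    (b - a) / (b + a) ≤ max |1 - ω * a| |1 - ω * b| := by
  set r := max |1 - ω * a| |1 - ω * b|
  have hleft : 1 - ω * a ≤ r := (le_abs_self _).trans (le_max_left _ _)
  have hright : -(1 - ω * b) ≤ r := (neg_le_abs _).trans (le_max_right _ _)
  rw [div_le_iff₀ (add_pos hb ha)]
  -- The combination with weights `b` and `a` eliminates `ω`.
  calc b - a = b * (1 - ω * a) + a * -(1 - ω * b) := by ring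
    _ ≤ b * r + a * r := by gcongr
    _ = r * (b + a) := by ring

lemma max_abs_one_sub_mul_eq_sub_div_add_iff (ha : 0 < a) (hab : a ≤ b) :
    max |1 - ω * a| |1 - ω * b| = (b - a) / (b + a) ↔ ω = 2 / (b + a) := by
  have hb : 0 < b := ha.trans_le hab
  have hsum : 0 < b + a := add_pos hb ha
  constructor
  · intro h
    have hleft : 1 - ω * a ≤ (b - a) / (b + a) :=
      (le_abs_self _).trans ((le_max_left _ _).trans_eq h)
    have hright : -(1 - ω * b) ≤ (b - a) / (b + a) :=
      (neg_le_abs _).trans ((le_max_right _ _).trans_eq h)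
    apply le_antisymm
    · rw [le_div_iff₀ hsum] at hright ⊢
      exact le_of_mul_le_mul_left (by linarith) hb
    · rw [le_div_iff₀ hsum] at hleft
      rw [div_le_iff₀ hsum]
      exact le_of_mul_le_mul_left (by linarith) ha
  · rintro rfl
    have hleft : 1 - 2 / (b + a) * a = (b - a) / (b + a) := by field_simp; ring
    have hright : 1 - 2 / (b + a) * b = -((b - a) / (b + a)) := by field_simp; ring
    rw [hleft, hright, abs_neg, max_self,
      abs_of_nonneg (div_nonneg (sub_nonneg.mpr hab) hsum.le)]

end Damping

section VankaSymbol

/-- The symbol `g_v` as a polynomial in the cosines of the two frequencies. -/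
noncomputable def vankaPoly (x y : ℝ) : ℝ :=
  (4 - 2 * x - 2 * y) * (7 + 2 * x + 2 * y + x * y) / 24

variable {x y : ℝ}

lemma vankaPoly_comm (x y : ℝ) : vankaPoly x y = vankaPoly y x := by
  unfold vankaPoly
  ring

lemma vankaPoly_le (hxy : x + y ∈ Icc (-2) 2) : vankaPoly x y ≤ 4 / 3 := by
  obtain ⟨hlo, hhi⟩ := hxy
  have hcube : 0 ≤ (x + y + 2) ^ 3 := pow_nonneg (by linarith) 3
  have hdiff : 0 ≤ (2 - (x + y)) * (x - y) ^ 2 := mul_nonneg (by linarith) (sq_nonneg _)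
  calc vankaPoly x y
      = 4 / 3 - (x + y + 2) ^ 3 / 48 - (2 - (x + y)) * (x - y) ^ 2 / 48 := by
        unfold vankaPoly
        ring
    _ ≤ 4 / 3 := by linarith

lemma le_vankaPoly (hx : x ∈ Icc (-1) 0) (hy : y ∈ Icc (-1) 1) : 3 / 4 ≤ vankaPoly x y := by
  obtain ⟨hx_lo, hx_hi⟩ := hx
  obtain ⟨hy_lo, hy_hi⟩ := hy
  have hsq : (1 + x) ^ 2 ≤ 1 := pow_le_one₀ (by linarith) (by linarith)
  have hone : 0 ≤ (1 + y) * (1 - (1 + x) ^ 2) := mul_nonneg (by linarith) (by linarith)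
  have hneg_one : 0 ≤ (1 - y) * (7 - (1 + x) ^ 2) := mul_nonneg (by linarith) (by linarith)
  have hconcave : 0 ≤ (2 + x) * ((1 + y) * (1 - y)) :=
    mul_nonneg (by linarith) (mul_nonneg (by linarith) (by linarith))
  -- `vankaPoly x` is concave: interpolate linearly between `y = 1` and `y = -1`,
  -- with a nonnegative remainder.
  calc 3 / 4
      ≤ 3 / 4 + (1 + y) * (1 - (1 + x) ^ 2) / 8 + (1 - y) * (7 - (1 + x) ^ 2) / 24
          + (2 + x) * ((1 + y) * (1 - y)) / 12 := by
        linarith only [hone, hneg_one, hconcave]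
    _ = vankaPoly x y := by
        unfold vankaPoly
        ring

lemma cos_nonpos_of_mem_TH {θ : ℝ × ℝ} (hθ : θ ∈ TH) : cos θ.1 ≤ 0 ∨ cos θ.2 ≤ 0 := by
  have cos_nonpos {t : ℝ} (ht : t ∈ Ioc (-(π / 2)) (3 * π / 2))
      (ht' : t ∉ Ioc (-(π / 2)) (π / 2)) : cos t ≤ 0 := by
    have hlt : π / 2 < t := not_le.mp fun h => ht' ⟨ht.1, h⟩
    exact cos_nonpos_of_pi_div_two_le_of_le hlt.le (by linarith [ht.2])
  obtain ⟨⟨h₁, h₂⟩, hlow⟩ := hθ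
  exact (not_and_or.mp hlow).imp (cos_nonpos h₁) (cos_nonpos h₂)

lemma mk_mem_TH {s t : ℝ} (hs : s ∈ Ioc (π / 2) (3 * π / 2))
    (ht : t ∈ Ioc (-(π / 2)) (3 * π / 2)) : (s, t) ∈ TH :=
  ⟨⟨⟨by linarith [hs.1, pi_pos], hs.2⟩, ht⟩, fun hlow => hs.1.not_ge hlow.1.2⟩

lemma isLeast_image_gv : IsLeast (gv '' TH) (3 / 4) := by
  constructor
  · have hcos : cos (3 * π / 2) = 0 := by
      rw [show 3 * π / 2 = π / 2 + π by ring, cos_add_pi, cos_pi_div_two, neg_zero]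
    refine ⟨(3 * π / 2, 0), mk_mem_TH ⟨?_, le_rfl⟩ ⟨?_, ?_⟩, ?_⟩
    iterate 3 linarith [pi_pos]
    simp only [gv, chi, hcos, cos_zero]
    norm_num
  · rintro _ ⟨θ, hθ, rfl⟩
    change 3 / 4 ≤ vankaPoly (cos θ.1) (cos θ.2)
    rcases cos_nonpos_of_mem_TH hθ with h₁ | h₂
    · exact le_vankaPoly ⟨neg_one_le_cos _, h₁⟩ (cos_mem_Icc _)
    · rw [vankaPoly_comm]
      exact le_vankaPoly ⟨neg_one_le_cos _, h₂⟩ (cos_mem_Icc _)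

lemma isGreatest_image_gv : IsGreatest (gv '' TH) (4 / 3) := by
  constructor
  · refine ⟨(π, π), mk_mem_TH ⟨?_, ?_⟩ ⟨?_, ?_⟩, ?_⟩
    iterate 4 linarith [pi_pos]
    simp only [gv, chi, cos_pi]
    norm_num
  · rintro _ ⟨θ, -, rfl⟩
    change vankaPoly (cos θ.1) (cos θ.2) ≤ 4 / 3
    exact vankaPoly_le ⟨by linarith [neg_one_le_cos θ.1, neg_one_le_cos θ.2],
      by linarith [cos_le_one θ.1, cos_le_one θ.2]⟩

end VankaSymbol

section BraessSarazin

variable {a b g ρ : ℝ}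

lemma sigmaStar_one_div_mem_uIcc (hρ : 0 ≤ ρ) (hg : 0 < g) :
    sigmaStar (1 / g) ρ ∈ uIcc 1 g := by
  have hden : 0 < (1 + ρ) * g + ρ := by positivity
  rw [← segment_eq_uIcc]
  refine ⟨(1 + ρ) * g / ((1 + ρ) * g + ρ), ρ / ((1 + ρ) * g + ρ), by positivity, by positivity,
    by rw [← add_div, div_self hden.ne'], ?_⟩
  simp only [sigmaStar, smul_eq_mul]
  field_simp
  ring

/-- The spectral radius of the symbol of the error operator, as a function of the value `g` of the
symbol `g_v` at the frequency under consideration. -/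
noncomputable def braessSarazinRadius (ρ ω g : ℝ) : ℝ :=
  max |1 - ω| (max |1 - ω * g| |1 - ω * sigmaStar (1 / g) ρ|)

lemma abs_one_sub_mul_le_braessSarazinRadius (ρ ω g : ℝ) :
    |1 - ω * g| ≤ braessSarazinRadius ρ ω g :=
  (le_max_left _ _).trans (le_max_right _ _)

lemma braessSarazinRadius_le (hρ : 0 ≤ ρ) (ha : 0 < a) (h1 : 1 ∈ Icc a b) (hg : g ∈ Icc a b)
    (ω : ℝ) :
    braessSarazinRadius ρ ω g ≤ max |1 - ω * a| |1 - ω * b| := by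
  have hσ : sigmaStar (1 / g) ρ ∈ Icc a b :=
    uIcc_subset_Icc h1 hg (sigmaStar_one_div_mem_uIcc hρ (ha.trans_le hg.1))
  have hone : |1 - ω| ≤ max |1 - ω * a| |1 - ω * b| := by
    simpa only [mul_one] using abs_one_sub_mul_le_max h1 ω
  exact max_le hone (max_le (abs_one_sub_mul_le_max hg ω) (abs_one_sub_mul_le_max hσ ω))

lemma isGreatest_image_braessSarazinRadius {G : Set ℝ} (hρ : 0 ≤ ρ) (ha : 0 < a)
    (h1 : 1 ∈ Icc a b) (hGa : IsLeast G a) (hGb : IsGreatest G b) (ω : ℝ) :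
    IsGreatest (braessSarazinRadius ρ ω '' G) (max |1 - ω * a| |1 - ω * b|) := by
  have hle {g : ℝ} (hg : g ∈ G) : braessSarazinRadius ρ ω g ≤ max |1 - ω * a| |1 - ω * b| :=
    braessSarazinRadius_le hρ ha h1 ⟨hGa.2 hg, hGb.2 hg⟩ ω
  refine ⟨?_, forall_mem_image.mpr fun _ => hle⟩
  rcases max_choice |1 - ω * a| |1 - ω * b| with hmax | hmax
  · exact ⟨a, hGa.1, (hle hGa.1).antisymm
      (hmax.trans_le (abs_one_sub_mul_le_braessSarazinRadius ρ ω a))⟩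
  · exact ⟨b, hGb.1, (hle hGb.1).antisymm
      (hmax.trans_le (abs_one_sub_mul_le_braessSarazinRadius ρ ω b))⟩

end BraessSarazin

theorem stmt_14 (ρ : ℝ) (hρ : 0 < ρ) (ω : ℝ) :
    7/25 ≤ sSup ((fun θ =>
        max |1 - ω| (max |1 - ω * gv θ| |1 - ω * sigmaStar (1 / gv θ) ρ|)) '' TH) ∧
      (sSup ((fun θ =>
        max |1 - ω| (max |1 - ω * gv θ| |1 - ω * sigmaStar (1 / gv θ) ρ|)) '' TH) = 7/25
        ↔ ω = 24/25) := by
  have hmax := isGreatest_image_braessSarazinRadius hρ.le (by norm_num)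
    ⟨by norm_num, by norm_num⟩ isLeast_image_gv isGreatest_image_gv ω
  simp only [image_image, braessSarazinRadius] at hmax
  have hfactor : (7 / 25 : ℝ) = (4 / 3 - 3 / 4) / (4 / 3 + 3 / 4) := by norm_num
  have hdamping : (24 / 25 : ℝ) = 2 / (4 / 3 + 3 / 4) := by norm_num
  rw [hmax.csSup_eq, hfactor, hdamping]
  exact ⟨sub_div_add_le_max_abs_one_sub_mul (by norm_num) (by norm_num) ω,
    max_abs_one_sub_mul_eq_sub_div_add_iff (by norm_num) (by norm_num)⟩
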